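/- Suppose F ∈ D(Λ), i.e. its quantile function Q satisfies de Haan's criterion. Then σ²(s) is regularly varying of exponent one at zero: for every λ > 0, σ²(λs)/σ²(s) → λ as s ↓ 0. -/

import Mathlib

open MeasureTheory Filter Set

noncomputable section

/-- The distribution function of a measure on `ℝ`. -/
def distFun (μ : Measure ℝ) : ℝ → ℝ := fun x => (μ (Set.Iic x)).toReal

/-- The quantile (left-continuous inverse) function of a distribution function. -/
def quantileFun (F : ℝ → ℝ) : ℝ → ℝ := fun s => sInf {x : ℝ | s ≤ F x}

/-- de Haan's criterion for the Gumbel domain of attraction, in terms of the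
quantile function `Q`. -/
def DeHaanGumbel (Q : ℝ → ℝ) : Prop :=
  ∀ x y z w : ℝ, 0 < x → 0 < y → 0 < z → 0 < w → y ≠ w →
    Tendsto (fun s : ℝ => (Q (1 - s * x) - Q (1 - s * z)) / (Q (1 - s * y) - Q (1 - s * w)))
      (nhdsWithin 0 (Set.Ioi 0))
      (nhds ((Real.log x - Real.log z) / (Real.log y - Real.log w)))

/-- The Lebesgue–Stieltjes measure `dQ` on `(0,1)` associated with the quantile function of
`F`: it coincides with the pushforward of Lebesgue measure under `F`
(for an interval `(a,b] ⊆ (0,1)` it has mass `Q(b+) - Q(a+)`). -/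
def dQ (μ : Measure ℝ) : Measure ℝ := Measure.map (distFun μ) volume

/-- `c(s,β) = s^{-β} ∫_{(1-s,1)} (1-u)^β dQ(u)`. -/
def cBeta (μ : Measure ℝ) (s β : ℝ) : ℝ :=
  s ^ (-β) * ∫ u in Set.Ioo (1 - s) 1, (1 - u) ^ β ∂(dQ μ)

/-- `c(s) = c(s,1) = s⁻¹ ∫_{(1-s,1)} (1-u) dQ(u)`. -/
def cFun (μ : Measure ℝ) (s : ℝ) : ℝ := cBeta μ s 1

/-- `σ²(s) = ∫_{(1-s,1)} ∫_{(1-s,1)} (min(u,v) - uv) dQ(u) dQ(v)`. -/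
def sigmaSq (μ : Measure ℝ) (s : ℝ) : ℝ :=
  ∫ v in Set.Ioo (1 - s) 1, (∫ u in Set.Ioo (1 - s) 1, (min u v - u * v) ∂(dQ μ)) ∂(dQ μ)

/-- A function is slowly varying at zero if `L(λ s)/L(s) → 1` as `s ↓ 0` for every `λ > 0`. -/
def SlowlyVaryingAtZero (L : ℝ → ℝ) : Prop :=
  ∀ lam : ℝ, 0 < lam →
    Tendsto (fun s : ℝ => L (lam * s) / L s) (nhdsWithin 0 (Set.Ioi 0)) (nhds 1)

/-- Condition (K) on the sequence of integers `k n`. -/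
def CondK (k : ℕ → ℕ) : Prop :=
  (∀ n : ℕ, 1 ≤ k n ∧ k n ≤ n) ∧ Tendsto k atTop atTop ∧
    Tendsto (fun n : ℕ => (k n : ℝ) / (n : ℝ)) atTop (nhds 0)

/-!
The covariance kernel factors as `min u v - u v = min u v (1 - max u v)`, and `min u v → 1` on
`(1 - s, 1)²`, so `σ²(s)` is asymptotic to the double integral of `1 - max u v`. Its superlevel
sets are the squares `(1 - s, 1 - t)²`, so the layer-cake formula turns that double integral into
`s ∫₀¹ dQ((1 - s, 1 - s x))² dx`. With `a(s) = Q(1 - s/e) - Q(1 - s)`, de Haan's criterion gives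
`dQ((1 - s, 1 - s x)) / a(s) → log (1/x)`, dominated by a power of `x` through Potter's bound.
Since `∫₀¹ log² x dx = 2`, this yields `σ²(s) ~ 2 s a(s)²`, and `a` is slowly varying.
-/

open scoped Topology ENNReal

section Quantile

variable (F : StieltjesFunction ℝ) {s t : ℝ}

theorem quantileFun_le_iff (hlow : ∃ y, F y < s) (hhigh : ∃ y, s ≤ F y) {x : ℝ} :
    quantileFun F s ≤ x ↔ s ≤ F x := by
  have hbdd : BddBelow {y | s ≤ F y} := by
    obtain ⟨a, ha⟩ := hlow
    exact ⟨a, fun y hy => (F.mono.reflect_lt (ha.trans_le hy)).le⟩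
  refine ⟨fun h => ?_, fun h => csInf_le hbdd h⟩
  refine ge_of_tendsto ((F.right_continuous x).mono Ioi_subset_Ici_self) ?_
  filter_upwards [self_mem_nhdsWithin] with y hy
  obtain ⟨z, hz, hzy⟩ := exists_lt_of_csInf_lt hhigh (h.trans_lt hy)
  exact le_trans hz (F.mono hzy.le)

theorem quantileFun_le_quantileFun (hlow : ∃ y, F y < s) (hst : s ≤ t) (hhigh : ∃ y, t ≤ F y) :
    quantileFun F s ≤ quantileFun F t := by
  have hlow' : ∃ y, F y < t := hlow.imp fun y hy => hy.trans_le hst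
  have hhigh' : ∃ y, s ≤ F y := hhigh.imp fun y hy => hst.trans hy
  exact (quantileFun_le_iff F hlow hhigh').2
    (hst.trans ((quantileFun_le_iff F hlow' hhigh).1 le_rfl))

theorem map_stieltjesFunction_volume_Ico (hlow : ∃ y, F y < s) (hst : s ≤ t)
    (hhigh : ∃ y, t ≤ F y) :
    Measure.map F volume (Ico s t) = ENNReal.ofReal (quantileFun F t - quantileFun F s) := by
  have hpre : F ⁻¹' Ico s t = Ico (quantileFun F s) (quantileFun F t) := by
    ext x
    rw [mem_preimage, mem_Ico, mem_Ico, ← not_le,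
      ← quantileFun_le_iff F hlow (hhigh.imp fun y hy => hst.trans hy),
      ← quantileFun_le_iff F (hlow.imp fun y hy => hy.trans_le hst) hhigh, not_le]
  rw [Measure.map_apply F.mono.measurable measurableSet_Ico, hpre, Real.volume_Ico]

end Quantile

/-- `ν` is the Lebesgue–Stieltjes measure `dQ` on `(0, 1)` of the nondecreasing function `Q`.
Masses are prescribed on left-closed right-open intervals, the convention that suits a
left-continuous `Q`; nothing is required outside `(0, 1)`. -/
structure IsLebesgueStieltjes (ν : Measure ℝ) (Q : ℝ → ℝ) : Prop where
  monotoneOn : MonotoneOn Q (Ioo 0 1)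
  measure_Ico : ∀ ⦃s t : ℝ⦄, 0 < s → s ≤ t → t < 1 → ν (Ico s t) = ENNReal.ofReal (Q t - Q s)

theorem distFun_eq_cdf (μ : Measure ℝ) [IsProbabilityMeasure μ] :
    distFun μ = ProbabilityTheory.cdf μ :=
  funext fun x => (ProbabilityTheory.cdf_eq_real μ x).symm

theorem isLebesgueStieltjes_dQ (μ : Measure ℝ) [IsProbabilityMeasure μ] :
    IsLebesgueStieltjes (dQ μ) (quantileFun (distFun μ)) := by
  have hlow : ∀ s : ℝ, 0 < s → ∃ y, ProbabilityTheory.cdf μ y < s := fun s hs =>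
    ((ProbabilityTheory.tendsto_cdf_atBot μ).eventually_lt_const hs).exists
  have hhigh : ∀ s : ℝ, s < 1 → ∃ y, s ≤ ProbabilityTheory.cdf μ y := fun s hs =>
    ((ProbabilityTheory.tendsto_cdf_atTop μ).eventually_const_le hs).exists
  rw [dQ, distFun_eq_cdf]
  exact ⟨fun s hs t ht hst => quantileFun_le_quantileFun _ (hlow s hs.1) hst (hhigh t ht.2),
    fun s t hs hst ht => map_stieltjesFunction_volume_Ico _ (hlow s hs) hst (hhigh t ht)⟩

/-- The auxiliary function `a` of the de Haan class, `a(s) = Q(1 - s/e) - Q(1 - s)`. The ratio `1/e`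
makes `Q(1 - s x) - Q(1 - s) ~ a(s) log (1/x)` hold without a multiplicative constant. -/
def gumbelScale (Q : ℝ → ℝ) (s : ℝ) : ℝ := Q (1 - s * Real.exp (-1)) - Q (1 - s)

theorem tendsto_const_mul_nhdsGT_zero {c : ℝ} (hc : 0 < c) :
    Tendsto (fun s : ℝ => c * s) (𝓝[>] 0) (𝓝[>] 0) :=
  fun _ h => eventually_nhdsGT_zero_mul_left hc h

theorem SlowlyVaryingAtZero.eventually_le_mul {L : ℝ → ℝ} (hL : SlowlyVaryingAtZero L)
    (hpos : ∀ᶠ s in 𝓝[>] (0 : ℝ), 0 < L s) {lam r : ℝ} (hlam : 0 < lam) (hr : 1 < r) :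
    ∀ᶠ s in 𝓝[>] (0 : ℝ), L (lam * s) ≤ r * L s := by
  filter_upwards [(hL lam hlam).eventually_le_const hr, hpos] with s hs hs0
  rwa [div_le_iff₀ hs0] at hs

namespace DeHaanGumbel

variable {Q : ℝ → ℝ}

theorem tendsto_sub_div_gumbelScale (hD : DeHaanGumbel Q) {x z : ℝ} (hx : 0 < x) (hz : 0 < z) :
    Tendsto (fun s => (Q (1 - s * x) - Q (1 - s * z)) / gumbelScale Q s) (𝓝[>] 0)
      (𝓝 (Real.log z - Real.log x)) := by
  have h := hD x (Real.exp (-1)) z 1 hx (Real.exp_pos _) hz one_pos (by simp)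
  simpa [gumbelScale, div_neg] using h

theorem slowlyVaryingAtZero_gumbelScale (hD : DeHaanGumbel Q) :
    SlowlyVaryingAtZero (gumbelScale Q) := by
  intro lam hlam
  have h := hD.tendsto_sub_div_gumbelScale (mul_pos hlam (Real.exp_pos (-1))) hlam
  rw [Real.log_mul hlam.ne' (Real.exp_pos _).ne', Real.log_exp, sub_add_cancel_left, neg_neg] at h
  refine h.congr fun s => ?_
  rw [gumbelScale.eq_def Q (lam * s), mul_left_comm, ← mul_assoc, mul_comm s lam]

theorem eventually_gumbelScale_pos (hD : DeHaanGumbel Q) (hQ : MonotoneOn Q (Ioo 0 1)) :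
    ∀ᶠ s in 𝓝[>] (0 : ℝ), 0 < gumbelScale Q s := by
  have hratio := hD.slowlyVaryingAtZero_gumbelScale 1 one_pos
  simp only [one_mul] at hratio
  filter_upwards [hratio.eventually_const_lt one_pos, Ioo_mem_nhdsGT one_pos]
    with s hne ⟨hs0, hs1⟩
  have hexp : Real.exp (-1) < 1 := by simp
  have hse : s * Real.exp (-1) < s := mul_lt_of_lt_one_right hs0 hexp
  have hse0 : 0 < s * Real.exp (-1) := mul_pos hs0 (Real.exp_pos _)
  have hnonneg : 0 ≤ gumbelScale Q s :=
    sub_nonneg.2 (hQ ⟨by linarith, by linarith⟩ ⟨by linarith, by linarith⟩ (by linarith))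
  exact hnonneg.lt_of_ne fun h => by simp [← h] at hne

theorem eventually_sub_exp_le_geom_sum (hD : DeHaanGumbel Q) (hQ : MonotoneOn Q (Ioo 0 1)) {r : ℝ}
    (hr : 1 < r) :
    ∀ᶠ s in 𝓝[>] (0 : ℝ), ∀ n : ℕ, Q (1 - s * Real.exp (-n)) - Q (1 - s) ≤
      (∑ i ∈ Finset.range n, r ^ i) * gumbelScale Q s := by
  have hle := hD.slowlyVaryingAtZero_gumbelScale.eventually_le_mul
    (hD.eventually_gumbelScale_pos hQ) (Real.exp_pos (-1)) hr
  obtain ⟨ε, hε, hsub⟩ := mem_nhdsGT_iff_exists_Ioo_subset.1 hle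
  suffices ∀ (n : ℕ), ∀ s ∈ Ioo 0 ε, Q (1 - s * Real.exp (-n)) - Q (1 - s) ≤
      (∑ i ∈ Finset.range n, r ^ i) * gumbelScale Q s by
    filter_upwards [Ioo_mem_nhdsGT hε] with s hs n using this n s hs
  intro n
  induction n with
  | zero => simp
  | succ n ih =>
    intro s hs
    have hmem : Real.exp (-1) * s ∈ Ioo 0 ε :=
      ⟨mul_pos (Real.exp_pos _) hs.1,
        (mul_le_of_le_one_left hs.1.le (Real.exp_le_one_iff.2 (by norm_num))).trans_lt hs.2⟩
    have hexp : s * Real.exp (-(n + 1 : ℕ)) = Real.exp (-1) * s * Real.exp (-n) := by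
      rw [mul_comm (Real.exp (-1)), mul_assoc, ← Real.exp_add]
      push_cast
      ring_nf
    calc Q (1 - s * Real.exp (-(n + 1 : ℕ))) - Q (1 - s)
        = (Q (1 - Real.exp (-1) * s * Real.exp (-n)) - Q (1 - Real.exp (-1) * s)) +
            gumbelScale Q s := by
          rw [hexp, gumbelScale, mul_comm s (Real.exp (-1))]; ring
      _ ≤ (∑ i ∈ Finset.range n, r ^ i) * (r * gumbelScale Q s) + gumbelScale Q s := by
          gcongr
          exact (ih _ hmem).trans
            (mul_le_mul_of_nonneg_left (hsub hs) (Finset.sum_nonneg fun i _ => by positivity))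
      _ = (∑ i ∈ Finset.range (n + 1), r ^ i) * gumbelScale Q s := by
          rw [geom_sum_succ]; ring

/-- Potter's bound: slow variation gives `a(s e⁻ⁱ) ≤ e^{δ i} a(s)` uniformly in `i`, and the
increment of `Q` between `1 - s` and `1 - s x` is covered by about `log (1/x)` such terms. -/
theorem exists_eventually_sub_le_rpow (hD : DeHaanGumbel Q) (hQ : MonotoneOn Q (Ioo 0 1)) {δ : ℝ}
    (hδ : 0 < δ) :
    ∃ C : ℝ, ∀ᶠ s in 𝓝[>] (0 : ℝ), ∀ x ∈ Ioo (0 : ℝ) 1,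
      Q (1 - s * x) - Q (1 - s) ≤ C * x ^ (-δ) * gumbelScale Q s := by
  set r := Real.exp δ
  have hr : 1 < r := Real.one_lt_exp_iff.2 hδ
  refine ⟨r / (r - 1), ?_⟩
  filter_upwards [hD.eventually_sub_exp_le_geom_sum hQ hr, hD.eventually_gumbelScale_pos hQ,
    Ioo_mem_nhdsGT one_pos] with s hgeom ha ⟨hs0, hs1⟩ x ⟨hx0, hx1⟩
  set n := ⌊-Real.log x⌋₊
  have hn : (n : ℝ) ≤ -Real.log x := Nat.floor_le (neg_nonneg.2 (Real.log_nonpos hx0.le hx1.le))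
  have hxn : Real.exp (-(n + 1 : ℕ)) ≤ x := by
    rw [← Real.le_log_iff_exp_le hx0, neg_le]
    exact_mod_cast (Nat.lt_floor_add_one (-Real.log x)).le
  have hpow : r ^ n ≤ x ^ (-δ) := by
    rw [← Real.exp_nat_mul, Real.rpow_def_of_pos hx0, Real.exp_le_exp]
    nlinarith
  have hmono : Q (1 - s * x) ≤ Q (1 - s * Real.exp (-(n + 1 : ℕ))) := by
    have hlow : 0 < s * Real.exp (-(n + 1 : ℕ)) := mul_pos hs0 (Real.exp_pos _)
    have hstep : s * Real.exp (-(n + 1 : ℕ)) ≤ s * x := by gcongr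
    have hsx : s * x < 1 := mul_lt_one_of_nonneg_of_lt_one_left hs0.le hs1 hx1.le
    exact hQ ⟨by linarith, by linarith⟩ ⟨by linarith, by linarith⟩ (by linarith)
  calc Q (1 - s * x) - Q (1 - s)
      ≤ (∑ i ∈ Finset.range (n + 1), r ^ i) * gumbelScale Q s := by linarith [hgeom (n + 1)]
    _ = (r ^ (n + 1) - 1) / (r - 1) * gumbelScale Q s := by rw [geom_sum_eq hr.ne']
    _ ≤ r * x ^ (-δ) / (r - 1) * gumbelScale Q s := by
        have : r ^ (n + 1) - 1 ≤ r * x ^ (-δ) := by rw [pow_succ']; nlinarith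
        have : 0 < r - 1 := sub_pos.2 hr
        gcongr
    _ = r / (r - 1) * x ^ (-δ) * gumbelScale Q s := by ring

end DeHaanGumbel

section DoubleIntegral

theorem integral_integral_eq_toReal_lintegral_lintegral {α β : Type*} [MeasurableSpace α]
    [MeasurableSpace β] {μ : Measure α} {ν : Measure β} [SFinite μ] {f : β → α → ℝ}
    (hf : Measurable (Function.uncurry f)) (hf0 : ∀ᵐ v ∂ν, ∀ᵐ u ∂μ, 0 ≤ f v u)
    (hfin : ∫⁻ v, ∫⁻ u, ENNReal.ofReal (f v u) ∂μ ∂ν ≠ ∞) :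
    ∫ v, ∫ u, f v u ∂μ ∂ν = (∫⁻ v, ∫⁻ u, ENNReal.ofReal (f v u) ∂μ ∂ν).toReal := by
  have hinner : Measurable fun v => ∫⁻ u, ENNReal.ofReal (f v u) ∂μ :=
    hf.ennreal_ofReal.lintegral_prod_right
  rw [← integral_toReal hinner.aemeasurable (ae_lt_top hinner hfin)]
  refine integral_congr_ae (hf0.mono fun v hv => ?_)
  exact integral_eq_lintegral_of_nonneg_ae hv hf.of_uncurry_left.aestronglyMeasurable

theorem lintegral_lintegral_ofReal_sub_max (ν : Measure ℝ) [SFinite ν] {b : ℝ}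
    (hb : ∀ᵐ u ∂ν, u ≤ b) :
    ∫⁻ v, ∫⁻ u, ENNReal.ofReal (b - max u v) ∂ν ∂ν = ∫⁻ t in Ioi 0, ν (Iio (b - t)) ^ 2 := by
  have hnonneg : ∀ᵐ p ∂ν.prod ν, 0 ≤ b - max p.2 p.1 := by
    filter_upwards [Measure.quasiMeasurePreserving_fst.ae hb,
      Measure.quasiMeasurePreserving_snd.ae hb] with p h1 h2
    exact sub_nonneg.2 (max_le h2 h1)
  have hlevel : ∀ t : ℝ, {p : ℝ × ℝ | t < b - max p.2 p.1} = Iio (b - t) ×ˢ Iio (b - t) := by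
    intro t
    ext p
    simp only [mem_ofPred_eq, mem_prod, mem_Iio, lt_sub_comm (a := t), max_lt_iff, and_comm]
  rw [← lintegral_prod (fun p : ℝ × ℝ => ENNReal.ofReal (b - max p.2 p.1)) (by fun_prop),
    lintegral_eq_lintegral_meas_lt _ hnonneg (by fun_prop)]
  simp only [hlevel, Measure.prod_prod, sq]

variable {s : ℝ}

/-- The double integral defining `σ²(s)`, against an arbitrary measure and with values in
`ℝ≥0∞`. -/
def sigmaSqLIntegral (ν : Measure ℝ) (s : ℝ) : ℝ≥0∞ :=
  ∫⁻ v in Ioo (1 - s) 1, ∫⁻ u in Ioo (1 - s) 1, ENNReal.ofReal (min u v - u * v) ∂ν ∂ν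

/-- The double integral of `1 - max u v` over `(1 - s, 1)²`: replacing the covariance kernel
`min u v - u * v = min u v * (1 - max u v)` of `σ²` by this one costs a factor tending to `1`. -/
def maxLIntegral (ν : Measure ℝ) (s : ℝ) : ℝ≥0∞ :=
  ∫⁻ v in Ioo (1 - s) 1, ∫⁻ u in Ioo (1 - s) 1, ENNReal.ofReal (1 - max u v) ∂ν ∂ν

theorem maxLIntegral_eq_mul_lintegral_measure_Ioo_sq (ν : Measure ℝ) [SFinite ν] (hs : 0 < s) :
    maxLIntegral ν s =
      ENNReal.ofReal s * ∫⁻ x in Ioo (0 : ℝ) 1, ν (Ioo (1 - s) (1 - s * x)) ^ 2 := by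
  have hle : ∀ᵐ u ∂ν.restrict (Ioo (1 - s) 1), u ≤ 1 :=
    ae_restrict_of_forall_mem measurableSet_Ioo fun u hu => hu.2.le
  have hmass : ∀ t ∈ Ioi (0 : ℝ),
      ν.restrict (Ioo (1 - s) 1) (Iio (1 - t)) = ν (Ioo (1 - s) (1 - t)) := fun t ht => by
    rw [Measure.restrict_apply measurableSet_Iio, inter_comm, Ioo_inter_Iio,
      min_eq_right (sub_le_self 1 (le_of_lt ht))]
  have hsupp : (fun t => ν (Ioo (1 - s) (1 - t)) ^ 2).support ⊆ Iio s := fun t ht => by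
    by_contra hts
    exact ht (by simp [Ioo_eq_empty (show ¬(1 - s < 1 - t) by simpa using hts)])
  have himage : (fun x : ℝ => s * x) '' Ioo 0 1 = Ioo 0 s := by
    rw [image_mul_left_Ioo hs, mul_zero, mul_one]
  calc maxLIntegral ν s
      = ∫⁻ t in Ioi 0, ν (Ioo (1 - s) (1 - t)) ^ 2 := by
        rw [maxLIntegral, lintegral_lintegral_ofReal_sub_max _ hle]
        exact setLIntegral_congr_fun measurableSet_Ioi fun t ht => by rw [hmass t ht]
    _ = ∫⁻ t in (fun x : ℝ => s * x) '' Ioo 0 1, ν (Ioo (1 - s) (1 - t)) ^ 2 := by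
        rw [himage, ← setLIntegral_eq_of_support_subset hsupp,
          Measure.restrict_restrict measurableSet_Iio, Iio_inter_Ioi]
    _ = ∫⁻ x in Ioo (0 : ℝ) 1, ENNReal.ofReal s * ν (Ioo (1 - s) (1 - s * x)) ^ 2 := by
        have hderiv (x : ℝ) : HasDerivAt (fun x => s * x) s x := by
          simpa using (hasDerivAt_id x).const_mul s
        rw [lintegral_image_eq_lintegral_abs_deriv_mul measurableSet_Ioo
          (fun x _ => (hderiv x).hasDerivWithinAt) (mul_right_injective₀ hs.ne').injOn,
          abs_of_pos hs]
    _ = _ := lintegral_const_mul' _ _ ENNReal.ofReal_ne_top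

theorem min_sub_mul_eq_min_mul_one_sub_max {R : Type*} [CommRing R] [LinearOrder R] (u v : R) :
    min u v - u * v = min u v * (1 - max u v) := by
  rw [mul_sub, min_mul_max, mul_one]

theorem sigmaSqLIntegral_le_maxLIntegral (ν : Measure ℝ) (s : ℝ) :
    sigmaSqLIntegral ν s ≤ maxLIntegral ν s := by
  refine setLIntegral_mono' measurableSet_Ioo fun v hv =>
    setLIntegral_mono' measurableSet_Ioo fun u hu => ENNReal.ofReal_le_ofReal ?_
  rw [min_sub_mul_eq_min_mul_one_sub_max]
  exact mul_le_of_le_one_left (sub_nonneg.2 (max_le hu.2.le hv.2.le))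
    ((min_le_left u v).trans hu.2.le)

theorem ofReal_mul_maxLIntegral_le_sigmaSqLIntegral (ν : Measure ℝ) (hs : s ≤ 1) :
    ENNReal.ofReal (1 - s) * maxLIntegral ν s ≤ sigmaSqLIntegral ν s := by
  simp_rw [maxLIntegral, ← lintegral_const_mul' _ _ ENNReal.ofReal_ne_top]
  refine setLIntegral_mono' measurableSet_Ioo fun v hv =>
    setLIntegral_mono' measurableSet_Ioo fun u hu => ?_
  rw [← ENNReal.ofReal_mul (sub_nonneg.2 hs), min_sub_mul_eq_min_mul_one_sub_max]
  exact ENNReal.ofReal_le_ofReal (mul_le_mul_of_nonneg_right (le_min hu.1.le hv.1.le)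
    (sub_nonneg.2 (max_le hu.2.le hv.2.le)))

instance sFinite_dQ (μ : Measure ℝ) : SFinite (dQ μ) :=
  inferInstanceAs (SFinite (Measure.map _ _))

theorem sigmaSq_eq_toReal_sigmaSqLIntegral (μ : Measure ℝ) (hs : s ≤ 1)
    (hfin : sigmaSqLIntegral (dQ μ) s ≠ ∞) :
    sigmaSq μ s = (sigmaSqLIntegral (dQ μ) s).toReal := by
  refine integral_integral_eq_toReal_lintegral_lintegral
    (f := fun v u => min u v - u * v) (by fun_prop) ?_ hfin
  refine ae_restrict_of_forall_mem measurableSet_Ioo fun v hv =>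
    ae_restrict_of_forall_mem measurableSet_Ioo fun u hu => ?_
  rw [min_sub_mul_eq_min_mul_one_sub_max]
  exact mul_nonneg ((sub_nonneg.2 hs).trans (le_min hu.1.le hv.1.le))
    (sub_nonneg.2 (max_le hu.2.le hv.2.le))

end DoubleIntegral

theorem continuousOn_mul_log_sq : ContinuousOn (fun x => x * Real.log x ^ 2) (Ici 0) := by
  have hsqrt : EqOn (fun x => x * Real.log x ^ 2) (fun x => (2 * (√x * Real.log √x)) ^ 2)
      (Ici 0) := fun x hx => by
    simp only [Real.log_sqrt hx, mul_pow, div_pow, Real.sq_sqrt hx]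
    ring
  have hsq : Continuous fun x : ℝ => (2 * (√x * Real.log √x)) ^ 2 :=
    ((Real.continuous_mul_log.comp Real.continuous_sqrt).const_mul 2).pow 2
  exact hsq.continuousOn.congr hsqrt

theorem lintegral_ofReal_neg_log_sq :
    ∫⁻ x in Ioo (0 : ℝ) 1, ENNReal.ofReal (-Real.log x) ^ 2 = 2 := by
  set G : ℝ → ℝ := fun x => x * Real.log x ^ 2 - 2 * (x * Real.log x) + 2 * x
  have hcont : ContinuousOn G (Icc 0 1) :=
    ((continuousOn_mul_log_sq.mono Icc_subset_Ici_self).sub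
      (Real.continuous_mul_log.const_mul 2).continuousOn).add (by fun_prop)
  have hderiv : ∀ x ∈ Ioo (0 : ℝ) 1, HasDerivAt G (Real.log x ^ 2) x := fun x hx => by
    have hlog := Real.hasDerivAt_log hx.1.ne'
    refine ((((hasDerivAt_id x).mul (hlog.pow 2)).sub
      (((hasDerivAt_id x).mul hlog).const_mul 2)).add
      ((hasDerivAt_id x).const_mul 2)).congr_deriv ?_
    have := hx.1.ne'
    simp only [id, Pi.pow_apply]
    field_simp
    ring
  have hint : IntegrableOn (fun x => Real.log x ^ 2) (Ioc 0 1) :=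
    intervalIntegral.integrableOn_deriv_of_nonneg hcont hderiv fun x _ => sq_nonneg _
  have hval : ∫ x in (0 : ℝ)..1, Real.log x ^ 2 = 2 := by
    rw [intervalIntegral.integral_eq_sub_of_hasDerivAt_of_le zero_le_one hcont hderiv
      ((intervalIntegrable_iff_integrableOn_Ioc_of_le zero_le_one).2 hint)]
    simp [G]
  rw [intervalIntegral.integral_of_le zero_le_one, integral_Ioc_eq_integral_Ioo] at hval
  calc ∫⁻ x in Ioo (0 : ℝ) 1, ENNReal.ofReal (-Real.log x) ^ 2
      = ∫⁻ x in Ioo (0 : ℝ) 1, ENNReal.ofReal (Real.log x ^ 2) :=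
        setLIntegral_congr_fun measurableSet_Ioo fun x hx => by
          rw [← neg_sq (Real.log x),
            ENNReal.ofReal_pow (neg_nonneg.2 (Real.log_nonpos hx.1.le hx.2.le))]
    _ = ENNReal.ofReal (∫ x in Ioo (0 : ℝ) 1, Real.log x ^ 2) :=
        (ofReal_integral_eq_lintegral_ofReal (hint.mono_set Ioo_subset_Ioc_self)
          (ae_of_all _ fun x => sq_nonneg _)).symm
    _ = 2 := by rw [hval, ENNReal.ofReal_ofNat]

theorem lintegral_ofReal_mul_rpow_sq_ne_top (C : ℝ) {p : ℝ} (hp : -(1 / 2) < p) :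
    ∫⁻ x in Ioo (0 : ℝ) 1, ENNReal.ofReal (C * x ^ p) ^ 2 ≠ ∞ := by
  have hint : IntegrableOn (fun x : ℝ => |C| ^ 2 * x ^ (p * 2)) (Ioo 0 1) :=
    ((intervalIntegral.integrableOn_Ioo_rpow_iff one_pos).2 (by linarith)).const_mul _
  refine ne_top_of_le_ne_top hint.lintegral_lt_top.ne
    (setLIntegral_mono' measurableSet_Ioo fun x hx => ?_)
  have hxp : 0 ≤ x ^ p := Real.rpow_nonneg hx.1.le p
  rw [Real.rpow_mul hx.1.le, Real.rpow_ofNat, ← mul_pow, ENNReal.ofReal_pow (by positivity)]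
  gcongr
  exact le_abs_self C

namespace IsLebesgueStieltjes

variable {ν : Measure ℝ} {Q : ℝ → ℝ}

theorem measureReal_Ico (hν : IsLebesgueStieltjes ν Q) {s t : ℝ} (hs : 0 < s) (hst : s ≤ t)
    (ht : t < 1) : ν.real (Ico s t) = Q t - Q s := by
  rw [Measure.real, hν.measure_Ico hs hst ht, ENNReal.toReal_ofReal]
  exact sub_nonneg.2 (hν.monotoneOn ⟨hs, hst.trans_lt ht⟩ ⟨hs.trans_le hst, ht⟩ hst)

theorem measure_Ico_ne_top (hν : IsLebesgueStieltjes ν Q) {s t : ℝ} (hs : 0 < s) (ht : t < 1) :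
    ν (Ico s t) ≠ ∞ := by
  rcases le_total s t with hst | hts
  · exact hν.measure_Ico hs hst ht ▸ ENNReal.ofReal_ne_top
  · simp [Ico_eq_empty hts.not_gt]

theorem measure_Ioo_ne_top (hν : IsLebesgueStieltjes ν Q) {s t : ℝ} (hs : 0 < s) (ht : t < 1) :
    ν (Ioo s t) ≠ ∞ :=
  measure_ne_top_of_subset Ioo_subset_Ico_self (hν.measure_Ico_ne_top hs ht)

theorem measureReal_Ioo_le (hν : IsLebesgueStieltjes ν Q) {s t : ℝ} (hs : 0 < s) (hst : s ≤ t)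
    (ht : t < 1) : ν.real (Ioo s t) ≤ Q t - Q s :=
  (measureReal_mono Ioo_subset_Ico_self (hν.measure_Ico_ne_top hs ht)).trans_eq
    (hν.measureReal_Ico hs hst ht)

theorem sub_le_measureReal_Ioo (hν : IsLebesgueStieltjes ν Q) {s r t : ℝ} (hs : 0 < s)
    (hsr : s < r) (hrt : r ≤ t) (ht : t < 1) : Q t - Q r ≤ ν.real (Ioo s t) := by
  rw [← hν.measureReal_Ico (hs.trans hsr) hrt ht]
  exact measureReal_mono (fun y hy => ⟨hsr.trans_le hy.1, hy.2⟩) (hν.measure_Ioo_ne_top hs ht)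

/-- Open intervals are covered by de Haan's criterion although they may miss an atom at `1 - s`:
the mass is squeezed between the increments of `Q` starting at `1 - s` and at `1 - s θ`, `θ ↑ 1`. -/
theorem tendsto_measureReal_Ioo_div_gumbelScale (hν : IsLebesgueStieltjes ν Q)
    (hD : DeHaanGumbel Q) {x : ℝ} (hx : x ∈ Ioo (0 : ℝ) 1) :
    Tendsto (fun s => ν.real (Ioo (1 - s) (1 - s * x)) / gumbelScale Q s) (𝓝[>] 0)
      (𝓝 (-Real.log x)) := by
  have ha := hD.eventually_gumbelScale_pos hν.monotoneOn
  have hsmall : ∀ᶠ s in 𝓝[>] (0 : ℝ), s ∈ Ioo (0 : ℝ) 1 := Ioo_mem_nhdsGT one_pos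
  refine tendsto_order.2 ⟨fun b hb => ?_, fun b hb => ?_⟩
  · have hlog : Tendsto (fun θ => Real.log θ - Real.log x) (𝓝[<] 1) (𝓝 (-Real.log x)) := by
      have h := (Real.continuousAt_log one_ne_zero).tendsto.sub_const (Real.log x)
      rw [Real.log_one, zero_sub] at h
      exact h.mono_left nhdsWithin_le_nhds
    obtain ⟨θ, hbθ, hxθ, hθ1⟩ :=
      ((hlog.eventually_const_lt hb).and (Ioo_mem_nhdsLT hx.2)).exists
    have hlim := hD.tendsto_sub_div_gumbelScale hx.1 (hx.1.trans hxθ)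
    filter_upwards [hlim.eventually_const_lt hbθ, ha, hsmall] with s hb has ⟨hs0, hs1⟩
    have hθs : s * θ < s := mul_lt_of_lt_one_right hs0 hθ1
    have hxs : s * x ≤ s * θ := by gcongr
    have hxs0 : 0 < s * x := mul_pos hs0 hx.1
    refine hb.trans_le (div_le_div_of_nonneg_right ?_ has.le)
    exact hν.sub_le_measureReal_Ioo (by linarith) (by linarith) (by linarith) (by linarith)
  · have hlim := hD.tendsto_sub_div_gumbelScale hx.1 one_pos
    rw [Real.log_one, zero_sub] at hlim
    filter_upwards [hlim.eventually_lt_const hb, ha, hsmall] with s hb has ⟨hs0, hs1⟩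
    have hxs : s * x < s := mul_lt_of_lt_one_right hs0 hx.2
    have hxs0 : 0 < s * x := mul_pos hs0 hx.1
    rw [mul_one] at hb
    refine lt_of_le_of_lt (div_le_div_of_nonneg_right ?_ has.le) hb
    exact hν.measureReal_Ioo_le (by linarith) (by linarith) (by linarith)

theorem tendsto_measure_Ioo_div_gumbelScale (hν : IsLebesgueStieltjes ν Q)
    (hD : DeHaanGumbel Q) {x : ℝ} (hx : x ∈ Ioo (0 : ℝ) 1) :
    Tendsto (fun s => ν (Ioo (1 - s) (1 - s * x)) / ENNReal.ofReal (gumbelScale Q s)) (𝓝[>] 0)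
      (𝓝 (ENNReal.ofReal (-Real.log x))) := by
  refine (ENNReal.tendsto_ofReal (hν.tendsto_measureReal_Ioo_div_gumbelScale hD hx)).congr' ?_
  filter_upwards [hD.eventually_gumbelScale_pos hν.monotoneOn, Ioo_mem_nhdsGT one_pos]
    with s ha ⟨hs0, hs1⟩
  have hsx : 0 < s * x := mul_pos hs0 hx.1
  rw [ENNReal.ofReal_div_of_pos ha, ofReal_measureReal
    (hν.measure_Ioo_ne_top (by linarith) (by linarith))]

theorem exists_eventually_measure_Ioo_div_gumbelScale_le (hν : IsLebesgueStieltjes ν Q)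
    (hD : DeHaanGumbel Q) {δ : ℝ} (hδ : 0 < δ) :
    ∃ C : ℝ, ∀ᶠ s in 𝓝[>] (0 : ℝ), ∀ x ∈ Ioo (0 : ℝ) 1,
      ν (Ioo (1 - s) (1 - s * x)) / ENNReal.ofReal (gumbelScale Q s) ≤
        ENNReal.ofReal (C * x ^ (-δ)) := by
  obtain ⟨C, hC⟩ := hD.exists_eventually_sub_le_rpow hν.monotoneOn hδ
  refine ⟨C, ?_⟩
  filter_upwards [hC, hD.eventually_gumbelScale_pos hν.monotoneOn, Ioo_mem_nhdsGT one_pos]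
    with s hC ha ⟨hs0, hs1⟩ x hx
  have hxs : s * x < s := mul_lt_of_lt_one_right hs0 hx.2
  have hxs0 : 0 < s * x := mul_pos hs0 hx.1
  rw [← ofReal_measureReal (hν.measure_Ioo_ne_top (by linarith) (by linarith)),
    ← ENNReal.ofReal_div_of_pos ha]
  refine ENNReal.ofReal_le_ofReal ((div_le_iff₀ ha).2 ?_)
  exact (hν.measureReal_Ioo_le (by linarith) (by linarith) (by linarith)).trans (hC x hx)

theorem tendsto_lintegral_sq_measure_Ioo_div_gumbelScale (hν : IsLebesgueStieltjes ν Q)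
    (hD : DeHaanGumbel Q) :
    Tendsto (fun s => ∫⁻ x in Ioo (0 : ℝ) 1,
      (ν (Ioo (1 - s) (1 - s * x)) / ENNReal.ofReal (gumbelScale Q s)) ^ 2) (𝓝[>] 0) (𝓝 2) := by
  obtain ⟨C, hC⟩ :=
    hν.exists_eventually_measure_Ioo_div_gumbelScale_le hD (δ := 1 / 4) (by norm_num)
  rw [← lintegral_ofReal_neg_log_sq]
  refine tendsto_lintegral_filter_of_dominated_convergence
    (fun x => ENNReal.ofReal (C * x ^ (-(1 / 4) : ℝ)) ^ 2) ?_ ?_ ?_ ?_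
  · filter_upwards [self_mem_nhdsWithin] with s hs
    have hanti : Antitone fun x => ν (Ioo (1 - s) (1 - s * x)) := fun x y hxy =>
      measure_mono (Ioo_subset_Ioo_right (by gcongr; exact le_of_lt hs))
    exact (hanti.measurable.div_const _).pow_const 2
  · filter_upwards [hC] with s hs
    exact ae_restrict_of_forall_mem measurableSet_Ioo fun x hx => by gcongr; exact hs x hx
  · exact lintegral_ofReal_mul_rpow_sq_ne_top C (by norm_num)
  · exact ae_restrict_of_forall_mem measurableSet_Ioo fun x hx =>
      ENNReal.Tendsto.pow (hν.tendsto_measure_Ioo_div_gumbelScale hD hx)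

theorem tendsto_maxLIntegral_div (hν : IsLebesgueStieltjes ν Q) [SFinite ν]
    (hD : DeHaanGumbel Q) :
    Tendsto (fun s => maxLIntegral ν s / ENNReal.ofReal (s * gumbelScale Q s ^ 2)) (𝓝[>] 0)
      (𝓝 2) := by
  refine (hν.tendsto_lintegral_sq_measure_Ioo_div_gumbelScale hD).congr' ?_
  filter_upwards [self_mem_nhdsWithin, hD.eventually_gumbelScale_pos hν.monotoneOn] with s hs ha
  have hs : 0 < s := hs
  rw [maxLIntegral_eq_mul_lintegral_measure_Ioo_sq ν hs, ENNReal.ofReal_mul hs.le,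
    ENNReal.mul_div_mul_left _ _ (ENNReal.ofReal_pos.2 hs).ne' ENNReal.ofReal_ne_top,
    ENNReal.ofReal_pow ha.le]
  simp_rw [div_eq_mul_inv, mul_pow, ← ENNReal.inv_pow]
  rw [lintegral_mul_const' _ _ (by simp [ha])]

theorem tendsto_sigmaSqLIntegral_div (hν : IsLebesgueStieltjes ν Q) [SFinite ν]
    (hD : DeHaanGumbel Q) :
    Tendsto (fun s => sigmaSqLIntegral ν s / ENNReal.ofReal (s * gumbelScale Q s ^ 2)) (𝓝[>] 0)
      (𝓝 2) := by
  have hmax := hν.tendsto_maxLIntegral_div hD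
  have hfactor : Tendsto (fun s : ℝ => ENNReal.ofReal (1 - s)) (𝓝[>] 0) (𝓝 1) := by
    have h : Continuous fun s : ℝ => ENNReal.ofReal (1 - s) :=
      ENNReal.continuous_ofReal.comp (by fun_prop)
    simpa using (h.tendsto 0).mono_left nhdsWithin_le_nhds
  have hlower := ENNReal.Tendsto.mul hfactor (by simp) hmax (by simp)
  rw [one_mul] at hlower
  refine tendsto_of_tendsto_of_tendsto_of_le_of_le' hlower hmax ?_
    (Eventually.of_forall fun s => ?_)
  · filter_upwards [Ioo_mem_nhdsGT one_pos] with s hs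
    rw [← mul_div_assoc]
    gcongr
    exact ofReal_mul_maxLIntegral_le_sigmaSqLIntegral ν hs.2.le
  · gcongr
    exact sigmaSqLIntegral_le_maxLIntegral ν s

end IsLebesgueStieltjes

theorem tendsto_sigmaSq_div (μ : Measure ℝ) [IsProbabilityMeasure μ]
    (hD : DeHaanGumbel (quantileFun (distFun μ))) :
    Tendsto (fun s => sigmaSq μ s / (s * gumbelScale (quantileFun (distFun μ)) s ^ 2)) (𝓝[>] 0)
      (𝓝 2) := by
  have hlim := (isLebesgueStieltjes_dQ μ).tendsto_sigmaSqLIntegral_div hD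
  have hreal := (ENNReal.tendsto_toReal ENNReal.ofNat_ne_top).comp hlim
  rw [ENNReal.toReal_ofNat] at hreal
  refine hreal.congr' ?_
  filter_upwards [hlim.eventually_ne ENNReal.ofNat_ne_top, Ioo_mem_nhdsGT one_pos]
    with s hfin hs
  have hL : sigmaSqLIntegral (dQ μ) s ≠ ∞ := fun h =>
    hfin (by rw [h, ENNReal.top_div_of_ne_top ENNReal.ofReal_ne_top])
  rw [Function.comp_apply, ENNReal.toReal_div,
    ENNReal.toReal_ofReal (mul_nonneg hs.1.le (sq_nonneg _)),
    ← sigmaSq_eq_toReal_sigmaSqLIntegral μ hs.2.le hL]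

theorem tendsto_comp_mul_div {f g : ℝ → ℝ} {c lam ρ : ℝ} (hc : c ≠ 0) (hlam : 0 < lam)
    (hfg : Tendsto (fun s => f s / g s) (𝓝[>] 0) (𝓝 c))
    (hg : Tendsto (fun s => g (lam * s) / g s) (𝓝[>] 0) (𝓝 ρ)) :
    Tendsto (fun s => f (lam * s) / f s) (𝓝[>] 0) (𝓝 ρ) := by
  have hscaled := hfg.comp (tendsto_const_mul_nhdsGT_zero hlam)
  have h := (hscaled.div hfg hc).mul hg
  rw [div_self hc, one_mul] at h
  refine h.congr' ?_
  filter_upwards [hfg.eventually_ne hc, hscaled.eventually_ne hc] with s hne hne'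
  obtain ⟨hf, hg⟩ := div_ne_zero_iff.1 hne
  obtain ⟨hf', hg'⟩ := div_ne_zero_iff.1 hne'
  simp only [Pi.div_apply, Function.comp_apply]
  field_simp

theorem sigmaSq_regularly_varying_general (μ : Measure ℝ) [IsProbabilityMeasure μ]
    (hD : DeHaanGumbel (quantileFun (distFun μ))) {lam : ℝ} (hlam : 0 < lam) :
    Tendsto (fun s => sigmaSq μ (lam * s) / sigmaSq μ s) (𝓝[>] 0) (𝓝 lam) := by
  refine tendsto_comp_mul_div two_ne_zero hlam (tendsto_sigmaSq_div μ hD) ?_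
  have hscale := ((hD.slowlyVaryingAtZero_gumbelScale lam hlam).pow 2).const_mul lam
  rw [one_pow, mul_one] at hscale
  refine hscale.congr' ?_
  filter_upwards [self_mem_nhdsWithin] with s hs
  have : s ≠ 0 := ne_of_gt hs
  field_simp

/-- If `F ∈ D(Λ)` then `σ²` is regularly varying of exponent one at
zero: `σ²(λs)/σ²(s) → λ` as `s ↓ 0` for every `λ > 0`. -/
theorem sigmaSq_regularly_varying
    (μ : Measure ℝ) [IsProbabilityMeasure μ] (F Q : ℝ → ℝ)
    (hF : F = distFun μ) (hQ : Q = quantileFun F)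
    (hD : DeHaanGumbel Q)
    (hfin : ∀ᶠ s in nhdsWithin (0:ℝ) (Set.Ioi 0),
      (∀ v ∈ Set.Ioo (1 - s) (1:ℝ),
        IntegrableOn (fun u : ℝ => min u v - u * v) (Set.Ioo (1 - s) 1) (dQ μ)) ∧
      IntegrableOn (fun v : ℝ => ∫ u in Set.Ioo (1 - s) 1, (min u v - u * v) ∂(dQ μ))
        (Set.Ioo (1 - s) 1) (dQ μ) ∧
      0 < sigmaSq μ s)
 :
    ∀ lam : ℝ, 0 < lam →
      Tendsto (fun s : ℝ => sigmaSq μ (lam * s) / sigmaSq μ s)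
        (nhdsWithin 0 (Set.Ioi 0)) (nhds lam) := by
  subst hF hQ
  exact fun lam hlam => sigmaSq_regularly_varying_general μ hD hlam
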